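/- Let (J_j)_{j≥1} be a bounded sequence of positive real numbers, let τ > 0 and k_B > 0. Then there exists an open neighborhood 𝒩 ⊆ ℂ of 1 such that for every N ≥ 1 and every H ∈ ℂ with e^{2H/(k_B·τ)} ∈ 𝒩, the partition function satisfies Z_τ^{(N)}(H) ≠ 0. -/

import Mathlib

noncomputable section

/-- The spin value `±1` of a Boolean configuration entry. -/
def spinC (b : Bool) : ℂ := if b then 1 else -1

/-- The cyclic successor on `Fin N` (periodic boundary conditions
`σ_{N+1} = σ_1`). -/
def nextIdx {N : ℕ} (j : Fin N) : Fin N := ⟨(j.val + 1) % N, Nat.mod_lt _ j.pos⟩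

/-- The partition function of the one-dimensional ferromagnetic
nearest-neighbor Ising model on `N` sites with couplings `J_1, …, J_N`,
temperature `τ`, Boltzmann constant `k_B`, (complex) magnetic field `H` and
periodic boundary conditions:
`Z_τ^{(N)}(H) = Σ_{σ ∈ {±1}^N} exp((1/(k_B τ)) Σ_j (J_j σ_j σ_{j+1} + H σ_j))`. -/
def isingZ (N : ℕ) (J : ℕ → ℝ) (kB τ : ℝ) (H : ℂ) : ℂ :=
  ∑ σ : Fin N → Bool,
    Complex.exp ((1 / ((kB * τ : ℝ) : ℂ)) *
      ∑ j : Fin N,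
        (((J (j.val + 1) : ℝ) : ℂ) * spinC (σ j) * spinC (σ (nextIdx j)) + H * spinC (σ j)))

/-- The open arc `R_a = {e^{iθ} : −2 arcsin a < θ < 2 arcsin a}` around 1. -/
def arcR (a : ℝ) : Set ℂ :=
  {z | ∃ θ : ℝ, -(2 * Real.arcsin a) < θ ∧ θ < 2 * Real.arcsin a ∧
    z = Complex.exp (θ * Complex.I)}

end


/-!
With `x = J / (k_B τ)` and `y = H / (k_B τ)`, the partition function is the trace of a product of
`2 × 2` transfer matrices `exp (x s t + y s)`. At `y = 0` such a matrix sends vectors `v` with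
`|arg (v₊ / v₋)| ≤ π / 4` to vectors with `|tan (arg (v₊ / v₋))| ≤ tanh |x| < 1`, and the field only
multiplies the ratio by `h = exp (2 y)`. So if `h` is close to `1`, at a distance depending only on
a bound for `|x|`, every transfer matrix, and hence every product of them, maps the closed cone into
the open one. A `2 × 2` matrix `P` of trace zero cannot do this, because `P ^ 2` is then scalar.
-/

section MatrixProducts

open Matrix

variable {α R : Type*} [Fintype α]

/-- A path from `a` is encoded by its later vertices `σ`, so that its `j`-th step runs from
`Fin.cons a σ j.castSucc` to `σ j`. -/
theorem list_ofFn_prod_mulVec_apply [DecidableEq α] [CommSemiring R] {n : ℕ}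
    (M : Fin n → Matrix α α R) (g : α → R) (a : α) :
    ((List.ofFn M).prod *ᵥ g) a =
      ∑ σ : Fin n → α, (∏ j, M j ((Fin.cons a σ : Fin (n + 1) → α) j.castSucc) (σ j)) *
        g ((Fin.cons a σ : Fin (n + 1) → α) (Fin.last n)) := by
  induction n generalizing a with
  | zero => simp
  | succ n ih =>
    rw [List.ofFn_succ, List.prod_cons, ← mulVec_mulVec,
      ← (Fin.consEquiv fun _ : Fin (n + 1) => α).sum_comp, Fintype.sum_prod_type]
    refine Finset.sum_congr rfl fun b _ => ?_
    rw [ih, Finset.mul_sum]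
    refine Finset.sum_congr rfl fun σ _ => ?_
    simp [Fin.prod_univ_succ, Fin.consEquiv, ← Fin.succ_last, mul_assoc]

theorem nextIdx_castSucc {n : ℕ} (j : Fin n) : nextIdx j.castSucc = j.succ :=
  Fin.ext (Nat.mod_eq_of_lt (Nat.succ_lt_succ j.isLt))

theorem nextIdx_last (n : ℕ) : nextIdx (Fin.last n) = 0 :=
  Fin.ext (Nat.mod_self _)

theorem trace_list_ofFn_prod [DecidableEq α] [CommSemiring R] {n : ℕ}
    (M : Fin (n + 1) → Matrix α α R) :
    (List.ofFn M).prod.trace = ∑ σ : Fin (n + 1) → α, ∏ j, M j (σ j) (σ (nextIdx j)) := by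
  have diag_apply (a : α) : (List.ofFn M).prod a a =
      ((List.ofFn fun j : Fin n => M j.castSucc).prod *ᵥ fun b => M (Fin.last n) b a) a := by
    rw [List.ofFn_succ', List.concat_eq_append, List.prod_append, List.prod_singleton]
    rfl
  simp only [trace, diag, diag_apply, list_ofFn_prod_mulVec_apply]
  rw [← (Fin.consEquiv fun _ : Fin (n + 1) => α).sum_comp, Fintype.sum_prod_type]
  simp [Fin.prod_univ_castSucc, nextIdx_castSucc, nextIdx_last, Fin.consEquiv]

theorem mapsTo_list_prod_mulVec [DecidableEq α] [Semiring R] {C C' : Set (α → R)}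
    (hC : C' ⊆ C) {l : List (Matrix α α R)} (hl : l ≠ []) (hM : ∀ M ∈ l, Set.MapsTo M.mulVec C C') :
    Set.MapsTo l.prod.mulVec C C' := by
  induction l with
  | nil => exact absurd rfl hl
  | cons M l ih =>
    obtain ⟨hM₀, hMl⟩ := List.forall_mem_cons.1 hM
    rcases eq_or_ne l [] with rfl | hl'
    · simpa using hM₀
    · intro v hv
      rw [List.prod_cons, ← mulVec_mulVec]
      exact hM₀ (hC (ih hl' hMl hv))

theorem sq_eq_neg_det_smul_one_of_trace_eq_zero [DecidableEq α] [CommRing R]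
    (hα : Fintype.card α = 2) {P : Matrix α α R} (hP : P.trace = 0) : P ^ 2 = -P.det • 1 := by
  nontriviality R
  have cayley_hamilton := P.aeval_self_charpoly
  rw [P.charpoly_of_card_eq_two hα, hP] at cayley_hamilton
  simpa [Algebra.algebraMap_eq_smul_one, add_eq_zero_iff_eq_neg] using cayley_hamilton

/-- If the trace vanished, then `P ^ 2` would be scalar by Cayley–Hamilton, so it could not move a
boundary vector of the cone `C` into the smaller cone `C'`. -/
theorem trace_ne_zero_of_mapsTo [CommRing R] (hα : Fintype.card α = 2) {C C' : Set (α → R)}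
    (hC : C' ⊂ C) (hsmul : ∀ (c : R) (v : α → R), c • v ∈ C' → v ∈ C')
    {P : Matrix α α R} (hP : Set.MapsTo P.mulVec C C') : P.trace ≠ 0 := by
  classical
  intro htrace
  obtain ⟨w, hwC, hwC'⟩ := Set.exists_of_ssubset hC
  have hmem : P *ᵥ (P *ᵥ w) ∈ C' := hP (hC.subset (hP hwC))
  rw [mulVec_mulVec, ← sq, sq_eq_neg_det_smul_one_of_trace_eq_zero hα htrace, smul_mulVec,
    one_mulVec] at hmem
  exact hwC' (hsmul _ w hmem)

end MatrixProducts

section Cones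

open ComplexConjugate

/-- The closed sector of slope `s` around the positive real axis, with the apex `0` removed. -/
def sector (s : ℝ) : Set ℂ := {z | 0 < z.re ∧ |z.im| ≤ s * z.re}

/-- The interior of `sector 1`. -/
def openSector : Set ℂ := {z | |z.im| < z.re}

theorem openSector_ssubset_sector_one : openSector ⊂ sector 1 := by
  refine Set.ssubset_iff_exists.2 ⟨fun z (hz : |z.im| < z.re) => ?_, 1 + Complex.I, ?_, ?_⟩
  · exact ⟨(abs_nonneg _).trans_lt hz, by linarith⟩
  · simp [sector]
  · simp [openSector]

theorem ofReal_mul_mem_openSector_iff {r : ℝ} (hr : 0 < r) {z : ℂ} :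
    r * z ∈ openSector ↔ z ∈ openSector := by
  simp [openSector, abs_mul, abs_of_pos hr, hr]

theorem mul_mem_openSector {q : ℝ} {h z : ℂ} (hh : ‖h - 1‖ < (1 - q) / 4) (hz : z ∈ sector q) :
    h * z ∈ openSector := by
  obtain ⟨hre, him⟩ := hz
  have hq : 0 < 1 - q := by linarith [norm_nonneg (h - 1)]
  have hnorm : ‖z‖ ≤ 2 * z.re := by
    calc ‖z‖ ≤ |z.re| + |z.im| := z.norm_le_abs_re_add_abs_im
      _ ≤ z.re + q * z.re := by rw [abs_of_pos hre]; gcongr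
      _ ≤ 2 * z.re := by linarith [mul_pos hq hre]
  have herr : ‖(h - 1) * z‖ < (1 - q) / 2 * z.re := by
    calc ‖(h - 1) * z‖ ≤ ‖h - 1‖ * (2 * z.re) := by rw [norm_mul]; gcongr
      _ < (1 - q) / 4 * (2 * z.re) := by gcongr
      _ = (1 - q) / 2 * z.re := by ring
  have hsplit : h * z = z + (h - 1) * z := by ring
  have hre_err := (abs_le.1 (Complex.abs_re_le_norm ((h - 1) * z))).1
  have him_err := Complex.abs_im_le_norm ((h - 1) * z)
  change |(h * z).im| < (h * z).re
  rw [hsplit, Complex.add_im, Complex.add_re]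
  linarith [abs_add_le z.im ((h - 1) * z).im]

/-- For `v : Bool → ℂ` the number `v₊ * conj v₋`, which has the argument of the ratio `v₊ / v₋`;
cones of vectors are defined by letting it range over a sector. -/
def crossTerm (v : Bool → ℂ) : ℂ := v true * conj (v false)

theorem crossTerm_smul (c : ℂ) (v : Bool → ℂ) :
    crossTerm (c • v) = (Complex.normSq c : ℝ) * crossTerm v := by
  simp only [crossTerm, Pi.smul_apply, smul_eq_mul, map_mul, ← Complex.mul_conj]
  ring

theorem two_mul_crossTerm_re_le (v : Bool → ℂ) :
    2 * (crossTerm v).re ≤ Complex.normSq (v true) + Complex.normSq (v false) := by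
  have normSq_sub_nonneg := Complex.normSq_nonneg (v true - v false)
  rw [Complex.normSq_sub] at normSq_sub_nonneg
  exact sub_nonneg.1 normSq_sub_nonneg

theorem crossTerm_preimage_openSector_ssubset :
    crossTerm ⁻¹' openSector ⊂ crossTerm ⁻¹' sector 1 := by
  have surjective_crossTerm : Function.Surjective crossTerm := fun z =>
    ⟨fun s => if s then z else 1, by simp [crossTerm]⟩
  refine (Set.preimage_mono openSector_ssubset_sector_one.subset).ssubset_of_ne fun h => ?_
  exact openSector_ssubset_sector_one.ne (Set.preimage_injective.2 surjective_crossTerm h)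

theorem crossTerm_mem_openSector_of_smul {c : ℂ} {v : Bool → ℂ}
    (h : crossTerm (c • v) ∈ openSector) : crossTerm v ∈ openSector := by
  rcases eq_or_ne c 0 with rfl | hc
  · simp [crossTerm, openSector] at h
  · rwa [crossTerm_smul, ofReal_mul_mem_openSector_iff (Complex.normSq_pos.2 hc)] at h

end Cones

section TransferMatrix

open Matrix ComplexConjugate

/-- The transfer matrix of one bond and one site, for reduced coupling `x = J / (k_B τ)` and reduced
field `y = H / (k_B τ)`. -/
noncomputable def transferMatrix (x : ℝ) (y : ℂ) : Matrix Bool Bool ℂ :=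
  Matrix.of fun s t => Complex.exp (x * spinC s * spinC t + y * spinC s)

theorem isingZ_succ_eq_trace (n : ℕ) (J : ℕ → ℝ) (kB τ : ℝ) (H : ℂ) :
    isingZ (n + 1) J kB τ H =
      (List.ofFn fun j : Fin (n + 1) =>
        transferMatrix (J (j + 1) / (kB * τ)) (H / ((kB * τ : ℝ) : ℂ))).prod.trace := by
  rw [trace_list_ofFn_prod]
  simp only [isingZ, transferMatrix, of_apply, ← Complex.exp_sum, Finset.mul_sum]
  refine Finset.sum_congr rfl fun σ _ => congrArg _ (Finset.sum_congr rfl fun j _ => ?_)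
  push_cast
  ring

theorem transferMatrix_mulVec_true (x : ℝ) (y : ℂ) (v : Bool → ℂ) :
    (transferMatrix x y *ᵥ v) true =
      Complex.exp y * (Real.exp x * v true + Real.exp (-x) * v false) := by
  simp only [transferMatrix, mulVec, dotProduct, spinC, of_apply, Fintype.sum_bool, if_true,
    Bool.false_eq_true, if_false, mul_one, mul_neg, Complex.exp_add, Complex.ofReal_exp,
    Complex.ofReal_neg]
  ring

theorem transferMatrix_mulVec_false (x : ℝ) (y : ℂ) (v : Bool → ℂ) :
    (transferMatrix x y *ᵥ v) false =
      Complex.exp (-y) * (Real.exp (-x) * v true + Real.exp x * v false) := by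
  simp only [transferMatrix, mulVec, dotProduct, spinC, of_apply, Fintype.sum_bool, if_true,
    Bool.false_eq_true, if_false, mul_one, mul_neg, neg_neg, Complex.exp_add, Complex.ofReal_exp,
    Complex.ofReal_neg]
  ring

theorem crossTerm_transferMatrix_mulVec (x : ℝ) (y : ℂ) (v : Bool → ℂ) :
    crossTerm (transferMatrix x y *ᵥ v) = (Complex.normSq (Complex.exp (-y)) : ℝ) *
      (Complex.exp (2 * y) * crossTerm (transferMatrix x 0 *ᵥ v)) := by
  have exp_eq : Complex.exp y = Complex.exp (2 * y) * Complex.exp (-y) := by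
    rw [← Complex.exp_add]
    ring_nf
  simp only [crossTerm, transferMatrix_mulVec_true, transferMatrix_mulVec_false, neg_zero,
    Complex.exp_zero, one_mul, map_mul, ← Complex.mul_conj, exp_eq]
  ring

theorem crossTerm_transferMatrix_zero_mulVec (x : ℝ) (v : Bool → ℂ) :
    crossTerm (transferMatrix x 0 *ᵥ v) =
      (Complex.normSq (v true) + Complex.normSq (v false) : ℝ) +
        Real.exp (2 * x) * crossTerm v + Real.exp (-(2 * x)) * conj (crossTerm v) := by
  have exp_mul_exp_neg : (Real.exp x : ℂ) * Real.exp (-x) = 1 := by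
    rw [← Complex.ofReal_mul, ← Real.exp_add, add_neg_cancel, Real.exp_zero, Complex.ofReal_one]
  have exp_two_mul (r : ℝ) : (Real.exp (2 * r) : ℂ) = Real.exp r ^ 2 := by
    rw [two_mul, Real.exp_add, Complex.ofReal_mul, sq]
  rw [← mul_neg, exp_two_mul, exp_two_mul]
  simp only [crossTerm, transferMatrix_mulVec_true, transferMatrix_mulVec_false, neg_zero,
    Complex.exp_zero, one_mul, map_add, map_mul, Complex.conj_ofReal, Complex.conj_conj,
    Complex.ofReal_add, ← Complex.mul_conj]
  linear_combination (v true * conj (v true) + v false * conj (v false)) * exp_mul_exp_neg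

theorem crossTerm_transferMatrix_zero_mulVec_re (x : ℝ) (v : Bool → ℂ) :
    (crossTerm (transferMatrix x 0 *ᵥ v)).re =
      Complex.normSq (v true) + Complex.normSq (v false) +
        2 * Real.cosh (2 * x) * (crossTerm v).re := by
  rw [crossTerm_transferMatrix_zero_mulVec, Real.cosh_eq]
  simp only [Complex.add_re, Complex.ofReal_re, Complex.re_ofReal_mul, Complex.conj_re]
  ring

theorem crossTerm_transferMatrix_zero_mulVec_im (x : ℝ) (v : Bool → ℂ) :
    (crossTerm (transferMatrix x 0 *ᵥ v)).im = 2 * Real.sinh (2 * x) * (crossTerm v).im := by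
  rw [crossTerm_transferMatrix_zero_mulVec, Real.sinh_eq]
  simp only [Complex.add_im, Complex.ofReal_im, Complex.im_ofReal_mul, Complex.conj_im]
  ring

theorem four_mul_cosh_sq_mul_crossTerm_re_le (x : ℝ) (v : Bool → ℂ) :
    4 * Real.cosh x ^ 2 * (crossTerm v).re ≤ (crossTerm (transferMatrix x 0 *ᵥ v)).re := by
  rw [crossTerm_transferMatrix_zero_mulVec_re, Real.cosh_two_mul, Real.sinh_sq]
  linarith [two_mul_crossTerm_re_le v]

theorem crossTerm_transferMatrix_zero_mulVec_mem_sector {x : ℝ} {v : Bool → ℂ}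
    (hv : crossTerm v ∈ sector 1) :
    crossTerm (transferMatrix x 0 *ᵥ v) ∈ sector (Real.tanh |x|) := by
  obtain ⟨hre, him⟩ := hv
  rw [one_mul] at him
  have cosh_pos : 0 < Real.cosh x := Real.cosh_pos x
  have tanh_abs : Real.tanh |x| = |Real.sinh x| / Real.cosh x := by
    rw [Real.tanh_eq_sinh_div_cosh, Real.cosh_abs, Real.abs_sinh]
  have tanh_nonneg : 0 ≤ Real.tanh |x| := by
    rw [tanh_abs]
    positivity
  have le_re := four_mul_cosh_sq_mul_crossTerm_re_le x v
  refine ⟨lt_of_lt_of_le (by positivity) le_re, ?_⟩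
  calc |(crossTerm (transferMatrix x 0 *ᵥ v)).im|
      = 4 * |Real.sinh x| * Real.cosh x * |(crossTerm v).im| := by
        rw [crossTerm_transferMatrix_zero_mulVec_im, Real.sinh_two_mul]
        simp only [abs_mul, abs_two, abs_of_pos cosh_pos]
        ring
    _ ≤ 4 * |Real.sinh x| * Real.cosh x * (crossTerm v).re := by gcongr
    _ = Real.tanh |x| * (4 * Real.cosh x ^ 2 * (crossTerm v).re) := by
        rw [tanh_abs]
        field_simp
    _ ≤ Real.tanh |x| * (crossTerm (transferMatrix x 0 *ᵥ v)).re := by gcongr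

theorem monotone_tanh : Monotone Real.tanh := fun x y hxy => by
  rwa [← Real.artanh_le_artanh_iff (Real.tanh_bijOn.mapsTo trivial)
    (Real.tanh_bijOn.mapsTo trivial), Real.artanh_tanh, Real.artanh_tanh]

theorem mapsTo_transferMatrix_mulVec {x K : ℝ} {y : ℂ} (hx : |x| ≤ K)
    (hy : ‖Complex.exp (2 * y) - 1‖ < (1 - Real.tanh K) / 4) :
    Set.MapsTo (transferMatrix x y).mulVec (crossTerm ⁻¹' sector 1) (crossTerm ⁻¹' openSector) := by
  intro v hv
  have tanh_le : Real.tanh |x| ≤ Real.tanh K := monotone_tanh hx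
  rw [Set.mem_preimage, crossTerm_transferMatrix_mulVec,
    ofReal_mul_mem_openSector_iff (Complex.normSq_pos.2 (Complex.exp_ne_zero _))]
  exact mul_mem_openSector (by linarith) (crossTerm_transferMatrix_zero_mulVec_mem_sector hv)

end TransferMatrix

theorem isingZ_ne_zero {N : ℕ} (hN : 1 ≤ N) {J : ℕ → ℝ} {kB τ K : ℝ} {H : ℂ}
    (hJ : ∀ j, 1 ≤ j → j ≤ N → |J j / (kB * τ)| ≤ K)
    (hH : ‖Complex.exp (2 * H / ((kB * τ : ℝ) : ℂ)) - 1‖ < (1 - Real.tanh K) / 4) :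
    isingZ N J kB τ H ≠ 0 := by
  obtain ⟨n, rfl⟩ := Nat.exists_eq_add_of_le' hN
  rw [isingZ_succ_eq_trace]
  refine trace_ne_zero_of_mapsTo Fintype.card_bool crossTerm_preimage_openSector_ssubset
    (fun _ _ => crossTerm_mem_openSector_of_smul)
    (mapsTo_list_prod_mulVec crossTerm_preimage_openSector_ssubset.subset (by simp) ?_)
  rw [List.forall_mem_ofFn_iff]
  intro j
  rw [mul_div_assoc] at hH
  exact mapsTo_transferMatrix_mulVec (hJ (j + 1) (by omega) (by omega)) hH

theorem ising_partition_zero_free_neighborhood_general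
    (J : ℕ → ℝ) (hJbd : ∃ K : ℝ, ∀ j, 1 ≤ j → |J j| ≤ K)
    (τ kB : ℝ) (hβ : kB * τ ≠ 0) :
    ∃ 𝒩 : Set ℂ, IsOpen 𝒩 ∧ (1 : ℂ) ∈ 𝒩 ∧
      ∀ N : ℕ, 1 ≤ N → ∀ H : ℂ,
        Complex.exp (2 * H / ((kB * τ : ℝ) : ℂ)) ∈ 𝒩 →
          isingZ N J kB τ H ≠ 0 := by
  obtain ⟨K, hK⟩ := hJbd
  have hradius : 0 < (1 - Real.tanh (K / |kB * τ|)) / 4 := by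
    linarith [Real.tanh_lt_one (K / |kB * τ|)]
  refine ⟨Metric.ball 1 _, Metric.isOpen_ball, Metric.mem_ball_self hradius, fun N hN H hH => ?_⟩
  refine isingZ_ne_zero hN (fun j hj _ => ?_) (mem_ball_iff_norm.1 hH)
  rw [abs_div, div_le_div_iff_of_pos_right (abs_pos.2 hβ)]
  exact hK j hj

/-- **Absence of phase transitions: a zero-free neighborhood of 1**
(Theorem 1.2). Let `(J_j)_{j≥1}` be a bounded sequence of positive couplings
and `τ, k_B > 0`. Then there is an open neighborhood `𝒩 ⊆ ℂ` of `1` such that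
for every `N ≥ 1` and every `H ∈ ℂ` with `e^{2H/(k_B τ)} ∈ 𝒩`, the partition
function `Z_τ^{(N)}(H)` is nonzero. -/
theorem ising_partition_zero_free_neighborhood
    (J : ℕ → ℝ) (hJ : ∀ j, 1 ≤ j → 0 < J j)
    (hJbd : ∃ K : ℝ, ∀ j, 1 ≤ j → J j ≤ K)
    (τ kB : ℝ) (hτ : 0 < τ) (hkB : 0 < kB) :
    ∃ 𝒩 : Set ℂ, IsOpen 𝒩 ∧ (1 : ℂ) ∈ 𝒩 ∧
      ∀ N : ℕ, 1 ≤ N → ∀ H : ℂ,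
        Complex.exp (2 * H / ((kB * τ : ℝ) : ℂ)) ∈ 𝒩 →
          isingZ N J kB τ H ≠ 0 :=
  ising_partition_zero_free_neighborhood_general J
    (hJbd.imp fun _ hK j hj => (abs_of_pos (hJ j hj)).trans_le (hK j hj)) τ kB (by positivity)
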